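/- arXiv:0911.1863 — 2 statements merged into one kernel-verified Lean document; each statement's English description precedes it below -/
import Mathlib

section
/- Let R be a nontrivial commutative ring, E a free R-module of finite rank, and E₁ a submodule of E admitting a complementary submodule E₂ (i.e., E₁ ∩ E₂ = 0 and E₁ + E₂ = E) with both E₁ and E₂ free of finite rank. Then the coannihilator of the dual annihilator of E₁ equals E₁, i.e., (E₁^⊥)^⊤ = E₁. -/
/-- Let `R` be a nontrivial commutative ring, `E` a free `R`-module of finite
rank, and `E₁` a submodule of `E` admitting a complementary submodule `E₂`,
with both `E₁` and `E₂` free of finite rank.  Then the coannihilator of the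
dual annihilator of `E₁` equals `E₁`: `(E₁^⊥)^⊤ = E₁`. -/
theorem stmt_7 {R : Type*} [CommRing R] [Nontrivial R]
    {E : Type*} [AddCommGroup E] [Module R E]
    [Module.Free R E] [Module.Finite R E]
    (E₁ E₂ : Submodule R E) (h : IsCompl E₁ E₂)
    [Module.Free R E₁] [Module.Finite R E₁]
    [Module.Free R E₂] [Module.Finite R E₂] :
    E₁.dualAnnihilator.dualCoannihilator = E₁ := by
  have : Module.Free R (E ⧸ E₁) :=
    Module.Free.of_equiv (Submodule.quotientEquivOfIsCompl E₁ E₂ h).symm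
  refine le_antisymm (fun v hv => ?_) E₁.le_dualAnnihilator_dualCoannihilator
  rw [← Submodule.Quotient.mk_eq_zero E₁, ← Module.forall_dual_apply_eq_zero_iff R]
  rw [Submodule.mem_dualCoannihilator] at hv
  refine fun φ => hv (φ.comp E₁.mkQ) ?_
  rw [Submodule.mem_dualAnnihilator]
  intro w hw
  simp [(Submodule.Quotient.mk_eq_zero E₁).mpr hw]
end

section
/- Let R be a nontrivial commutative ring, E a free R-module of finite rank, and E₁ a submodule of E admitting a complementary submodule E₂ (i.e., E₁ ∩ E₂ = 0 and E₁ + E₂ = E) with both E₁ and E₂ free of finite rank. Then the rank of E₁ equals the corank in Dual R E of the dual annihilator E₁^⊥ (i.e., rank E₁ = rank((Dual R E)/E₁^⊥)), and the corank of E₁ in E equals the rank of E₁^⊥ (i.e., rank(E/E₁) = rank(E₁^⊥)). -/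
/-- If a submodule has a complement, every functional on it extends to the whole module. -/
theorem Submodule.dualRestrict_surjective_of_isCompl {R M : Type*} [CommRing R]
    [AddCommGroup M] [Module R M] {p q : Submodule R M} (h : IsCompl p q) :
    Function.Surjective p.dualRestrict := fun φ =>
  ⟨φ ∘ₗ p.projectionOnto q h, by ext x; simp⟩

/-- Let `R` be a nontrivial commutative ring, `E` a free `R`-module of finite
rank, and `E₁` a submodule of `E` admitting a complementary submodule `E₂`,
with both `E₁` and `E₂` free of finite rank.  Then
`rank E₁ = rank ((Dual R E) ⧸ E₁^⊥)` (the corank of `E₁^⊥` in `Dual R E`) and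
`rank (E ⧸ E₁) = rank E₁^⊥` (the corank of `E₁` in `E` is the rank of
`E₁^⊥`). -/
theorem stmt_8 {R : Type*} [CommRing R] [Nontrivial R]
    {E : Type*} [AddCommGroup E] [Module R E]
    [Module.Free R E] [Module.Finite R E]
    (E₁ E₂ : Submodule R E) (h : IsCompl E₁ E₂)
    [Module.Free R E₁] [Module.Finite R E₁]
    [Module.Free R E₂] [Module.Finite R E₂] :
    Module.finrank R E₁ =
      Module.finrank R (Module.Dual R E ⧸ E₁.dualAnnihilator) ∧
    Module.finrank R (E ⧸ E₁) = Module.finrank R E₁.dualAnnihilator := by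
  constructor
  · rw [← E₁.dualRestrict_ker_eq_dualAnnihilator,
      (E₁.dualRestrict.quotKerEquivOfSurjective
        (Submodule.dualRestrict_surjective_of_isCompl h)).finrank_eq]
    exact (Module.finrank_linearMap_self R R E₁).symm
  · have : Module.Free R (E ⧸ E₁) :=
      Module.Free.of_equiv (E₁.quotientEquivOfIsCompl E₂ h).symm
    rw [← E₁.dualQuotEquivDualAnnihilator.finrank_eq]
    exact (Module.finrank_linearMap_self R R (E ⧸ E₁)).symm
end
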